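/- For every instance of interval selection with proportional weights, every prediction assignment, and every maximum-weight feasible set OPT, the solution produced by algorithm Naive satisfies ALG ≥ OPT − η, where η is the total prediction error relative to OPT. -/

import Mathlib

/-!
Charge the deficit `OPT - ALG`, which is `w (OPT \ ALG) - w (ALG \ OPT)`, to the inaccurate
predictions. An interval of `OPT \ ALG` predicted `0` pays for itself. One predicted `1` was blocked
by an accepted interval, which lies outside `OPT` since `OPT` is feasible; hence the intervals of
this kind weigh at most `∑ J ∈ OPT conflicting with I, w J` summed over `I ∈ ALG \ OPT`, and
subtracting `w (ALG \ OPT)` leaves exactly the error of the false positives in `ALG`. The other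
errors can be discarded because all errors are nonnegative: neither dropping an interval
from `OPT` nor exchanging the intervals of `OPT` that conflict with `I` for `I` itself can increase
the weight.
-/

attribute [local instance] Classical.propDecidable

noncomputable section

/-- An interval `I = (s, f)` with `s < f`, occupying `[s, f)`. -/
structure Ivl where
  s : ℝ
  f : ℝ
  lt : s < f

namespace Ivl

/-- The set of points occupied by an interval: the half-open set `[s, f)`. -/
def occ (I : Ivl) : Set ℝ := Set.Ico I.s I.f

/-- The length of an interval, `f - s` (also its proportional weight). -/
def len (I : Ivl) : ℝ := I.f - I.s

end Ivl

/-- Two intervals conflict if their occupied sets intersect. -/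
def Conflict (I J : Ivl) : Prop := (I.occ ∩ J.occ).Nonempty

/-- A set of intervals is feasible if its elements are pairwise disjoint. -/
def Feasible (S : Finset Ivl) : Prop :=
  ∀ I ∈ S, ∀ J ∈ S, I ≠ J → ¬ Conflict I J

/-- `opt` is a maximum-cardinality feasible subset of the instance's intervals. -/
def IsMaxCardOpt (inst : List Ivl) (opt : Finset Ivl) : Prop :=
  (∀ I ∈ opt, I ∈ inst) ∧ Feasible opt ∧
    ∀ T : Finset Ivl, (∀ I ∈ T, I ∈ inst) → Feasible T → T.card ≤ opt.card

/-- The prediction error introduced by interval `I`, relative to `opt`,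
with weight function `w`. -/
def err (w : Ivl → ℝ) (opt : Finset Ivl) (Prd : Ivl → Bool) (I : Ivl) : ℝ :=
  if (Prd I = true ↔ I ∈ opt) then 0
  else if I ∈ opt then w I
  else (∑ J ∈ opt.filter (fun J => Conflict J I), w J) - w I

/-- The total prediction error of the instance relative to `opt`. -/
def totalErr (w : Ivl → ℝ) (opt : Finset Ivl) (Prd : Ivl → Bool)
    (inst : List Ivl) : ℝ :=
  (inst.map (err w opt Prd)).sum

/-- The total (proportional) weight of a finite set of intervals. -/
def wsum (S : Finset Ivl) : ℝ := ∑ I ∈ S, I.len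

/-- `opt` is a maximum-weight feasible subset of the instance's intervals,
for proportional weights. -/
def IsMaxWeightOpt (inst : List Ivl) (opt : Finset Ivl) : Prop :=
  (∀ I ∈ opt, I ∈ inst) ∧ Feasible opt ∧
    ∀ T : Finset Ivl, (∀ I ∈ T, I ∈ inst) → Feasible T → wsum T ≤ wsum opt

/-- One step of algorithm `Naive`: accept `I` iff it is predicted optimal
and conflicts with nothing in the current solution. -/
def naiveStep (Prd : Ivl → Bool) (S : Finset Ivl) (I : Ivl) : Finset Ivl :=
  if Prd I = true ∧ ∀ J ∈ S, ¬ Conflict I J then insert I S else S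

/-- Algorithm `Naive` run on the whole instance, in order. -/
def naive (Prd : Ivl → Bool) (inst : List Ivl) : Finset Ivl :=
  inst.foldl (naiveStep Prd) ∅

section FinsetSums

variable {ι α M : Type*} [AddCommMonoid M] [PartialOrder M] [AddLeftMono M]

theorem sum_biUnion_le_of_nonneg [DecidableEq α] {s : Finset ι} {t : ι → Finset α}
    {f : α → M} (hf : ∀ a ∈ s.biUnion t, 0 ≤ f a) :
    ∑ a ∈ s.biUnion t, f a ≤ ∑ i ∈ s, ∑ a ∈ t i, f a := by
  have image_snd : (s.sigma t).image Sigma.snd = s.biUnion t := by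
    ext a
    simp
  rw [← image_snd] at hf ⊢
  rw [Finset.sum_sigma']
  exact Finset.sum_image_le_of_nonneg hf

theorem sum_le_sum_map_list_of_nonneg {l : List α} {t : Finset α} {f : α → M}
    (ht : ∀ a ∈ t, a ∈ l) (hf : ∀ a ∈ l, 0 ≤ f a) : ∑ a ∈ t, f a ≤ (l.map f).sum := by
  have nonneg : ∀ a ∈ l.toFinset, 0 ≤ f a := fun a ha => hf a (List.mem_toFinset.mp ha)
  calc ∑ a ∈ t, f a
      ≤ ∑ a ∈ l.toFinset, f a :=
        Finset.sum_le_sum_of_subset_of_nonneg (fun a ha => List.mem_toFinset.mpr (ht a ha))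
          fun a ha _ => nonneg a ha
    _ ≤ ∑ a ∈ l.toFinset, l.count a • f a :=
        Finset.sum_le_sum fun a ha => le_self_nsmul (nonneg a ha)
          (List.count_pos_iff.mpr (List.mem_toFinset.mp ha)).ne'
    _ = (l.map f).sum := (Finset.sum_list_map_count l f).symm

end FinsetSums

theorem Conflict.refl (I : Ivl) : Conflict I I :=
  ⟨I.s, ⟨le_rfl, I.lt⟩, ⟨le_rfl, I.lt⟩⟩

theorem Conflict.symm {I J : Ivl} (h : Conflict I J) : Conflict J I := by
  rwa [Conflict, Set.inter_comm]

theorem Feasible.mono {S T : Finset Ivl} (hT : Feasible T) (hST : S ⊆ T) : Feasible S :=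
  fun I hI J hJ => hT I (hST hI) J (hST hJ)

theorem Feasible.insert {S : Finset Ivl} {I : Ivl} (hS : Feasible S)
    (hI : ∀ J ∈ S, ¬ Conflict J I) : Feasible (insert I S) := by
  intro K hK L hL hKL
  rcases Finset.mem_insert.mp hK with rfl | hKS <;> rcases Finset.mem_insert.mp hL with rfl | hLS
  · exact absurd rfl hKL
  · exact fun h => hI L hLS h.symm
  · exact hI K hKS
  · exact hS K hKS L hLS hKL

section Naive

variable {Prd : Ivl → Bool} {inst : List Ivl} {S : Finset Ivl} {I J : Ivl}

theorem subset_naiveStep : S ⊆ naiveStep Prd S I := by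
  unfold naiveStep
  split_ifs
  · exact Finset.subset_insert I S
  · exact Finset.Subset.refl S

theorem mem_or_of_mem_naiveStep (h : J ∈ naiveStep Prd S I) :
    J ∈ S ∨ J = I ∧ Prd J = true := by
  unfold naiveStep at h
  split_ifs at h with accepted
  · rcases Finset.mem_insert.mp h with rfl | h
    · exact Or.inr ⟨rfl, accepted.1⟩
    · exact Or.inl h
  · exact Or.inl h

theorem exists_conflict_mem_naiveStep (hI : Prd I = true) :
    ∃ J ∈ naiveStep Prd S I, Conflict I J := by
  by_cases free : ∀ J ∈ S, ¬ Conflict I J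
  · rw [naiveStep, if_pos ⟨hI, free⟩]
    exact ⟨I, Finset.mem_insert_self I S, .refl I⟩
  · push Not at free
    obtain ⟨J, hJ, hIJ⟩ := free
    exact ⟨J, subset_naiveStep hJ, hIJ⟩

theorem naive_concat : naive Prd (inst ++ [I]) = naiveStep Prd (naive Prd inst) I :=
  List.foldl_concat ..

theorem mem_and_predicted_of_mem_naive (h : I ∈ naive Prd inst) : I ∈ inst ∧ Prd I = true := by
  induction inst using List.reverseRecOn with
  | nil => exact absurd h (Finset.notMem_empty I)
  | append_singleton inst K ih =>
    rw [naive_concat] at h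
    rcases mem_or_of_mem_naiveStep h with h | ⟨rfl, hI⟩
    · exact ⟨List.mem_append_left [K] (ih h).1, (ih h).2⟩
    · exact ⟨List.mem_concat_self, hI⟩

theorem exists_conflict_mem_naive (hI : I ∈ inst) (hPrd : Prd I = true) :
    ∃ J ∈ naive Prd inst, Conflict I J := by
  induction inst using List.reverseRecOn with
  | nil => exact absurd hI List.not_mem_nil
  | append_singleton inst K ih =>
    rw [naive_concat]
    rcases List.mem_append.mp hI with hI | hI
    · obtain ⟨J, hJ, hIJ⟩ := ih hI
      exact ⟨J, subset_naiveStep hJ, hIJ⟩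
    · obtain rfl := List.mem_singleton.mp hI
      exact exists_conflict_mem_naiveStep hPrd

theorem Feasible.exists_conflict_mem_naive_sdiff {opt : Finset Ivl} (hopt : Feasible opt)
    (hJ : J ∈ inst) (hJopt : J ∈ opt \ naive Prd inst) (hPrd : Prd J = true) :
    ∃ I ∈ naive Prd inst \ opt, Conflict J I := by
  obtain ⟨J_opt, J_rejected⟩ := Finset.mem_sdiff.mp hJopt
  obtain ⟨I, hI, hJI⟩ := exists_conflict_mem_naive hJ hPrd
  have hne : J ≠ I := fun e => J_rejected (e ▸ hI)
  exact ⟨I, Finset.mem_sdiff.mpr ⟨hI, fun I_opt => hopt J J_opt I I_opt hne hJI⟩, hJI⟩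

end Naive

/-- `opt` is a maximum-weight feasible subset of the instance's intervals, for an arbitrary weight
function `w`; `IsMaxWeightOpt` is the case `w = Ivl.len`. -/
structure IsMaxWeightFeasible (w : Ivl → ℝ) (inst : List Ivl) (opt : Finset Ivl) : Prop where
  mem_inst : ∀ I ∈ opt, I ∈ inst
  feasible : Feasible opt
  sum_le : ∀ T : Finset Ivl, (∀ I ∈ T, I ∈ inst) → Feasible T → ∑ I ∈ T, w I ≤ ∑ I ∈ opt, w I

section Error

variable {w : Ivl → ℝ} {inst : List Ivl} {opt : Finset Ivl} {Prd : Ivl → Bool} {I : Ivl}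

theorem err_of_mem_of_not_predicted (hI : I ∈ opt) (hPrd : ¬ Prd I = true) :
    err w opt Prd I = w I := by
  simp [err, hI, hPrd]

theorem err_of_notMem_of_predicted (hI : I ∉ opt) (hPrd : Prd I = true) :
    err w opt Prd I = (∑ J ∈ opt with Conflict J I, w J) - w I := by
  simp [err, hI, hPrd]

namespace IsMaxWeightFeasible

theorem weight_nonneg (h : IsMaxWeightFeasible w inst opt) (hI : I ∈ opt) : 0 ≤ w I := by
  have drop : ∑ J ∈ opt.erase I, w J ≤ ∑ J ∈ opt, w J :=
    h.sum_le _ (fun J hJ => h.mem_inst J (Finset.mem_of_mem_erase hJ))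
      (h.feasible.mono (Finset.erase_subset I opt))
  linarith [Finset.add_sum_erase opt w hI]

theorem weight_le_sum_conflict (h : IsMaxWeightFeasible w inst opt) (hI : I ∈ inst) :
    w I ≤ ∑ J ∈ opt with Conflict J I, w J := by
  set kept := {J ∈ opt | ¬ Conflict J I}
  have kept_feasible : Feasible kept := h.feasible.mono (Finset.filter_subset _ opt)
  have exchange : ∑ J ∈ insert I kept, w J ≤ ∑ J ∈ opt, w J := by
    refine h.sum_le _ (fun J hJ => ?_)
      (kept_feasible.insert fun J hJ => (Finset.mem_filter.mp hJ).2)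
    rcases Finset.mem_insert.mp hJ with rfl | hJ
    · exact hI
    · exact h.mem_inst J (Finset.mem_of_mem_filter J hJ)
  have notMem_kept : I ∉ kept := fun hI => (Finset.mem_filter.mp hI).2 (.refl I)
  rw [Finset.sum_insert notMem_kept,
    ← Finset.sum_filter_add_sum_filter_not opt (fun J => Conflict J I)] at exchange
  linarith

theorem err_nonneg (h : IsMaxWeightFeasible w inst opt) (hI : I ∈ inst) :
    0 ≤ err w opt Prd I := by
  unfold err
  split_ifs with _ hopt
  · exact le_rfl
  · exact h.weight_nonneg hopt
  · exact sub_nonneg.mpr (h.weight_le_sum_conflict hI)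

theorem sum_err_le_totalErr (h : IsMaxWeightFeasible w inst opt) {T : Finset Ivl}
    (hT : ∀ I ∈ T, I ∈ inst) : ∑ I ∈ T, err w opt Prd I ≤ totalErr w opt Prd inst :=
  sum_le_sum_map_list_of_nonneg hT fun _ => h.err_nonneg

theorem sum_predicted_sdiff_naive_le (h : IsMaxWeightFeasible w inst opt) :
    ∑ J ∈ opt \ naive Prd inst with Prd J = true, w J ≤
      ∑ I ∈ naive Prd inst \ opt, ∑ J ∈ opt with Conflict J I, w J := by
  set blocked := (naive Prd inst \ opt).biUnion fun I => {J ∈ opt | Conflict J I}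
  have blocked_nonneg : ∀ J ∈ blocked, 0 ≤ w J := by
    intro J hJ
    obtain ⟨I, -, hJI⟩ := Finset.mem_biUnion.mp hJ
    exact h.weight_nonneg (Finset.mem_of_mem_filter J hJI)
  have subset_blocked : {J ∈ opt \ naive Prd inst | Prd J = true} ⊆ blocked := by
    intro J hJ
    obtain ⟨hJ, hPrd⟩ := Finset.mem_filter.mp hJ
    have J_opt : J ∈ opt := (Finset.mem_sdiff.mp hJ).1
    obtain ⟨I, hI, hJI⟩ :=
      h.feasible.exists_conflict_mem_naive_sdiff (h.mem_inst J J_opt) hJ hPrd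
    exact Finset.mem_biUnion.mpr ⟨I, hI, Finset.mem_filter.mpr ⟨J_opt, hJI⟩⟩
  calc ∑ J ∈ opt \ naive Prd inst with Prd J = true, w J
      ≤ ∑ J ∈ blocked, w J :=
        Finset.sum_le_sum_of_subset_of_nonneg subset_blocked fun J hJ _ => blocked_nonneg J hJ
    _ ≤ ∑ I ∈ naive Prd inst \ opt, ∑ J ∈ opt with Conflict J I, w J :=
        sum_biUnion_le_of_nonneg blocked_nonneg

theorem sum_sdiff_naive_le (h : IsMaxWeightFeasible w inst opt) :
    ∑ J ∈ opt \ naive Prd inst, w J ≤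
      ∑ J ∈ opt \ naive Prd inst with ¬ Prd J = true, err w opt Prd J +
        ∑ I ∈ naive Prd inst \ opt, (err w opt Prd I + w I) := by
  have missed_eq : ∑ J ∈ opt \ naive Prd inst with ¬ Prd J = true, w J =
      ∑ J ∈ opt \ naive Prd inst with ¬ Prd J = true, err w opt Prd J := by
    refine Finset.sum_congr rfl fun J hJ => ?_
    obtain ⟨hJ, hPrd⟩ := Finset.mem_filter.mp hJ
    exact (err_of_mem_of_not_predicted (Finset.mem_sdiff.mp hJ).1 hPrd).symm
  have conflict_eq : ∑ I ∈ naive Prd inst \ opt, ∑ J ∈ opt with Conflict J I, w J =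
      ∑ I ∈ naive Prd inst \ opt, (err w opt Prd I + w I) := by
    refine Finset.sum_congr rfl fun I hI => ?_
    obtain ⟨I_naive, I_opt⟩ := Finset.mem_sdiff.mp hI
    rw [err_of_notMem_of_predicted I_opt (mem_and_predicted_of_mem_naive I_naive).2,
      sub_add_cancel]
  rw [← Finset.sum_filter_not_add_sum_filter _ (fun J => Prd J = true), missed_eq, ← conflict_eq]
  gcongr
  exact h.sum_predicted_sdiff_naive_le

end IsMaxWeightFeasible

end Error

theorem naive_proportional_performance_general
    {w : Ivl → ℝ} {inst : List Ivl} (Prd : Ivl → Bool)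
    {opt : Finset Ivl} (hopt : IsMaxWeightFeasible w inst opt) :
    ∑ I ∈ naive Prd inst, w I ≥ ∑ I ∈ opt, w I - totalErr w opt Prd inst := by
  set alg := naive Prd inst
  set missed := {J ∈ opt \ alg | ¬ Prd J = true}
  have missed_subset : missed ⊆ opt := (Finset.filter_subset _ _).trans Finset.sdiff_subset
  have missed_disjoint : Disjoint missed (alg \ opt) :=
    Finset.disjoint_sdiff.mono_left missed_subset
  have charged_mem_inst : ∀ I ∈ missed ∪ alg \ opt, I ∈ inst := by
    intro I hI
    rcases Finset.mem_union.mp hI with hI | hI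
    · exact hopt.mem_inst I (missed_subset hI)
    · exact (mem_and_predicted_of_mem_naive (Finset.mem_sdiff.mp hI).1).1
  rw [ge_iff_le, sub_le_comm]
  calc ∑ I ∈ opt, w I - ∑ I ∈ alg, w I
      = ∑ J ∈ opt \ alg, w J - ∑ I ∈ alg \ opt, w I := Finset.sum_sdiff_sub_sum_sdiff.symm
    _ ≤ ∑ J ∈ missed, err w opt Prd J + ∑ I ∈ alg \ opt, err w opt Prd I := by
        rw [sub_le_iff_le_add, add_assoc, ← Finset.sum_add_distrib]
        exact hopt.sum_sdiff_naive_le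
    _ = ∑ I ∈ missed ∪ alg \ opt, err w opt Prd I := (Finset.sum_union missed_disjoint).symm
    _ ≤ totalErr w opt Prd inst := hopt.sum_err_le_totalErr charged_mem_inst

theorem naive_proportional_performance
    (inst : List Ivl) (hdist : inst.Nodup) (Prd : Ivl → Bool)
    (opt : Finset Ivl) (hopt : IsMaxWeightOpt inst opt) :
    wsum (naive Prd inst) ≥ wsum opt - totalErr Ivl.len opt Prd inst :=
  naive_proportional_performance_general Prd ⟨hopt.1, hopt.2.1, hopt.2.2⟩
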